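/- Let H be a real Hilbert space, C ⊆ H a nonempty closed convex set, and F : [0,∞) → H right-differentiable at t = 0 with derivative F'(0) (i.e. (F(t) − F(0))/t → F'(0) strongly as t → 0⁺). Define u(t) := proj_C(F(t)), set u₀ := u(0) and y := F(0) − u₀ (so y ∈ N_C(u₀)). If C is polyhedric at u₀ for y, then the map t ↦ u(t) is right-differentiable at t = 0 and its derivative is u'(0) = proj_{T_C(u₀) ∩ (ℝy)^⊥}(F'(0)), the metric projection of F'(0) onto the nonempty closed convex cone T_C(u₀) ∩ (ℝy)^⊥. -/

import Mathlib

open Filter Topology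
open scoped RealInnerProductSpace

/-- The tangent cone to a convex set `C` at `x`:
the closure of `{z | ∃ λ > 0, x + λ z ∈ C}`. -/
def tangentConeSet {H : Type*} [NormedAddCommGroup H] [InnerProductSpace ℝ H]
    (C : Set H) (x : H) : Set H :=
  closure {z | ∃ l : ℝ, 0 < l ∧ x + l • z ∈ C}

/-- `C` is polyhedric at `x ∈ C` for `y ∈ N_C(x)` if
`T_C(x) ∩ (ℝy)^⊥ = closure ({z | ∃ λ > 0, x + λ z ∈ C} ∩ (ℝy)^⊥)`. -/
def Polyhedric {H : Type*} [NormedAddCommGroup H] [InnerProductSpace ℝ H]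
    (C : Set H) (x y : H) : Prop :=
  tangentConeSet C x ∩ {z | ⟪z, y⟫ = 0}
    = closure ({z | ∃ l : ℝ, 0 < l ∧ x + l • z ∈ C} ∩ {z | ⟪z, y⟫ = 0})

/-- `IsProj C x u` means `u` is the metric projection of `x` onto `C`:
`u ∈ C` and `u` is at minimal distance from `x` among points of `C`. -/
def IsProj {H : Type*} [NormedAddCommGroup H] [InnerProductSpace ℝ H]
    (C : Set H) (x u : H) : Prop :=
  u ∈ C ∧ ∀ w ∈ C, ‖x - u‖ ≤ ‖x - w‖

/-- Variational characterization of the metric projection onto a convex set. -/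
lemma isProj_iff_inner_le_zero {H : Type*} [NormedAddCommGroup H] [InnerProductSpace ℝ H]
    {C : Set H} (hC : Convex ℝ C) {x p : H} :
    IsProj C x p ↔ p ∈ C ∧ ∀ c ∈ C, ⟪x - p, c - p⟫ ≤ 0 := by
  refine and_congr_right fun hp => ?_
  rw [← norm_eq_iInf_iff_real_inner_le_zero hC hp]
  have hbdd : BddBelow (Set.range fun c : C => ‖x - c‖) :=
    ⟨0, Set.forall_mem_range.2 fun _ => norm_nonneg _⟩
  have : Nonempty C := ⟨⟨p, hp⟩⟩
  constructor
  · intro h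
    exact le_antisymm (le_ciInf fun c => h c c.2) (ciInf_le hbdd ⟨p, hp⟩)
  · intro h c hc
    exact h ▸ ciInf_le hbdd ⟨c, hc⟩

/-- A point has a metric projection onto any nonempty closed convex set. -/
lemma exists_isProj {H : Type*} [NormedAddCommGroup H] [InnerProductSpace ℝ H] [CompleteSpace H]
    {C : Set H} (hne : C.Nonempty) (hcl : IsClosed C) (hC : Convex ℝ C) (x : H) :
    ∃ p, IsProj C x p := by
  obtain ⟨p, hp, h⟩ := exists_norm_eq_iInf_of_complete_convex hne hcl.isComplete hC x
  exact ⟨p, (isProj_iff_inner_le_zero hC).2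
    ⟨hp, (norm_eq_iInf_iff_real_inner_le_zero hC hp).1 h⟩⟩

/-- The cone of feasible directions `{z | ∃ λ > 0, x + λ z ∈ C}` of a convex set at one of its
points. -/
def feasibleCone {H : Type*} [NormedAddCommGroup H] [InnerProductSpace ℝ H]
    {C : Set H} (hC : Convex ℝ C) {x : H} (hx : x ∈ C) : PointedCone ℝ H where
  carrier := {z | ∃ l : ℝ, 0 < l ∧ x + l • z ∈ C}
  zero_mem' := ⟨1, one_pos, by simpa using hx⟩
  add_mem' := by
    rintro a b ⟨l, hl, ha⟩ ⟨m, hm, hb⟩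
    refine ⟨l * m / (l + m), by positivity, ?_⟩
    have h := hC ha hb (a := m / (l + m)) (b := l / (l + m)) (by positivity) (by positivity)
      (by field_simp; ring)
    convert h using 1
    have hx1 : x = (m / (l + m) + l / (l + m)) • x := by
      rw [← add_div, add_comm m l, div_self (by positivity), one_smul]
    nth_rewrite 1 [hx1]
    module
  smul_mem' := by
    rintro ⟨r, hr⟩ a ⟨l, hl, ha⟩
    rcases hr.eq_or_lt with rfl | hr
    · exact ⟨1, one_pos, by simpa [Subtype.ext_iff] using hx⟩
    · refine ⟨l / r, by positivity, ?_⟩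
      change x + (l / r) • (r • a) ∈ C
      rwa [smul_smul, div_mul_cancel₀ _ hr.ne']

/-- The tangent cone of a convex set at one of its points, as a closed convex cone. -/
def tangentProperCone {H : Type*} [NormedAddCommGroup H] [InnerProductSpace ℝ H]
    {C : Set H} (hC : Convex ℝ C) {x : H} (hx : x ∈ C) : ProperCone ℝ H :=
  Submodule.closure (feasibleCone hC hx)

/-- The closed convex cone of vectors whose inner products with a bounded family have
nonnegative lower limit. -/
def liminfInnerNonnegCone {H ι : Type*} [NormedAddCommGroup H] [InnerProductSpace ℝ H]
    {l : Filter ι} {v : ι → H} {M : ℝ} (hM : ∀ᶠ i in l, ‖v i‖ ≤ M) : ProperCone ℝ H where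
  carrier := {g | ∀ ε > 0, ∀ᶠ i in l, -ε ≤ ⟪g, v i⟫}
  zero_mem' ε hε := .of_forall fun i => by simpa using hε.le
  add_mem' {a b} ha hb ε hε := by
    filter_upwards [ha (ε / 2) (by positivity), hb (ε / 2) (by positivity)] with i h₁ h₂
    rw [inner_add_left]
    linarith
  smul_mem' := by
    rintro ⟨r, hr⟩ a ha ε hε
    filter_upwards [ha (ε / (r + 1)) (by positivity)] with i h
    change -ε ≤ ⟪r • a, v i⟫
    rw [real_inner_smul_left]
    have h₁ : r * (ε / (r + 1)) ≤ ε := by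
      rw [← mul_div_assoc, div_le_iff₀ (by positivity)]
      nlinarith
    nlinarith [mul_le_mul_of_nonneg_left h hr]
  isClosed' := by
    refine isClosed_of_closure_subset fun g hg ε hε => ?_
    have hM' : 0 < |M| + 1 := by positivity
    obtain ⟨b, hb, hgb⟩ := Metric.mem_closure_iff.1 hg (ε / 2 / (|M| + 1)) (by positivity)
    filter_upwards [hb (ε / 2) (by positivity), hM] with i h₁ h₂
    have h₃ : |⟪g - b, v i⟫| ≤ ε / 2 := by
      calc |⟪g - b, v i⟫| ≤ ‖g - b‖ * ‖v i‖ := abs_real_inner_le_norm _ _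
        _ ≤ (ε / 2 / (|M| + 1)) * (|M| + 1) := by
          rw [dist_eq_norm] at hgb
          gcongr
          linarith [le_abs_self M]
        _ = ε / 2 := by field_simp
    rw [inner_sub_left] at h₃
    linarith [(abs_le.1 h₃).1]

/-- If a bounded family in a closed convex cone `T` is asymptotically orthogonal to `y`, then
its inner products with any `g` in the dual cone of `T ∩ (ℝy)^⊥` have nonnegative lower limit. -/
lemma eventually_neg_le_inner_of_dual {H ι : Type*} [NormedAddCommGroup H]
    [InnerProductSpace ℝ H] [CompleteSpace H] {l : Filter ι} {v : ι → H} {M : ℝ}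
    (hM : ∀ᶠ i in l, ‖v i‖ ≤ M) (T : ProperCone ℝ H) (hT : ∀ᶠ i in l, v i ∈ T) {y g : H}
    (hy : Tendsto (fun i => ⟪y, v i⟫) l (𝓝 0))
    (hg : ∀ z ∈ T, ⟪z, y⟫ = 0 → 0 ≤ ⟪g, z⟫) {ε : ℝ} (hε : 0 < ε) :
    ∀ᶠ i in l, -ε ≤ ⟪g, v i⟫ := by
  suffices h : g ∈ liminfInnerNonnegCone hM from h ε hε
  by_contra hgG
  obtain ⟨z, hz, hgz⟩ := ProperCone.hyperplane_separation' _ hgG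
  have hzT : z ∈ T := by
    rw [← ProperCone.innerDual_innerDual T]
    refine fun n hn => hz n fun δ hδ => ?_
    filter_upwards [hT] with i hi
    have := hn hi
    change 0 ≤ ⟪v i, n⟫ at this
    rw [real_inner_comm]
    linarith
  have hpos : 0 ≤ ⟪y, z⟫ := hz y fun δ hδ =>
    (hy.eventually (lt_mem_nhds (neg_lt_zero.2 hδ))).mono fun _ h => h.le
  have hneg : 0 ≤ ⟪-y, z⟫ := hz (-y) fun δ hδ => by
    filter_upwards [hy.eventually (gt_mem_nhds hδ)] with i hi
    rw [inner_neg_left]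
    linarith
  rw [inner_neg_left] at hneg
  refine hgz.not_ge (hg z hzT ?_)
  rw [real_inner_comm]
  linarith

/-- If `p₀` is the projection of `x₀` and `p₀ + t v` that of `x₀ + t q`, then `v` satisfies the
variational inequality of the projection of `q` against each direction `z ⊥ x₀ - p₀`
that is feasible with step `t`. -/
lemma inner_sub_sub_nonpos_of_proj {H : Type*} [NormedAddCommGroup H] [InnerProductSpace ℝ H]
    {C : Set H} {x₀ p₀ q v z : H} {t : ℝ} (ht : 0 < t)
    (h₀ : ∀ c ∈ C, ⟪x₀ - p₀, c - p₀⟫ ≤ 0) (hv : p₀ + t • v ∈ C)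
    (h : ∀ c ∈ C, ⟪x₀ + t • q - (p₀ + t • v), c - (p₀ + t • v)⟫ ≤ 0)
    (hz : p₀ + t • z ∈ C) (hzy : ⟪z, x₀ - p₀⟫ = 0) : ⟪q - v, z - v⟫ ≤ 0 := by
  have h₁ := h₀ _ hv
  have h₂ := h _ hz
  rw [show x₀ + t • q - (p₀ + t • v) = (x₀ - p₀) + t • (q - v) by module,
    show p₀ + t • z - (p₀ + t • v) = t • (z - v) by module, inner_smul_right, inner_add_left,
    real_inner_smul_left, inner_sub_right (x₀ - p₀), real_inner_comm z, hzy] at h₂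
  rw [add_sub_cancel_left, inner_smul_right] at h₁
  have h₃ : t * (t * ⟪q - v, z - v⟫) ≤ 0 := by linarith
  exact nonpos_of_mul_nonpos_right (nonpos_of_mul_nonpos_right h₃ ht) ht

/-- Let `C ⊆ H` be nonempty closed convex, `F : [0,∞) → H`
right-differentiable at `t = 0` with derivative `F'(0)`, and
`u(t) := proj_C(F(t))`. Set `u₀ := u(0)` and `y := F(0) − u₀`. If `C` is
polyhedric at `u₀` for `y`, then `u` is right-differentiable at `t = 0` and
`u'(0) = proj_{T_C(u₀) ∩ (ℝy)^⊥}(F'(0))`. -/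
theorem statement8
    {H : Type*} [NormedAddCommGroup H] [InnerProductSpace ℝ H] [CompleteSpace H]
    (C : Set H) (hne : C.Nonempty) (hcl : IsClosed C) (hconv : Convex ℝ C)
    (F : ℝ → H) (F' : H)
    (hF' : Tendsto (fun t : ℝ => (1 / t) • (F t - F 0))
      (nhdsWithin 0 (Set.Ioi 0)) (nhds F'))
    (u : ℝ → H)
    (hu : ∀ t : ℝ, 0 ≤ t → IsProj C (F t) (u t))
    (hpoly : Polyhedric C (u 0) (F 0 - u 0)) :
    ∃ u' : H,
      Tendsto (fun t : ℝ => (1 / t) • (u t - u 0))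
        (nhdsWithin 0 (Set.Ioi 0)) (nhds u')
      ∧ IsProj (tangentConeSet C (u 0) ∩ {z | ⟪z, F 0 - u 0⟫ = 0}) F' u' := by
  set y := F 0 - u 0 with hy
  have hproj : ∀ t, 0 ≤ t → u t ∈ C ∧ ∀ c ∈ C, ⟪F t - u t, c - u t⟫ ≤ 0 :=
    fun t ht => (isProj_iff_inner_le_zero hconv).1 (hu t ht)
  obtain ⟨hu₀, hN⟩ := hproj 0 le_rfl
  let T := tangentProperCone hconv hu₀
  have hKcl : IsClosed ((T : Set H) ∩ {z | ⟪z, y⟫ = 0}) :=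
    T.isClosed.inter (isClosed_eq (by fun_prop) continuous_const)
  have hKconv : Convex ℝ ((T : Set H) ∩ {z | ⟪z, y⟫ = 0}) := by
    refine T.convex.inter fun a ha b hb r s _ _ _ => ?_
    simp only [Set.mem_ofPred_eq] at ha hb ⊢
    rw [inner_add_left, real_inner_smul_left, real_inner_smul_left, ha, hb]
    simp
  have h0K : (0 : H) ∈ (T : Set H) ∩ {z | ⟪z, y⟫ = 0} := ⟨zero_mem T, inner_zero_left _⟩
  obtain ⟨w, hw⟩ := exists_isProj ⟨0, h0K⟩ hKcl hKconv F'
  refine ⟨w, ?_, hw⟩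
  obtain ⟨hwK, hwN⟩ := (isProj_iff_inner_le_zero hKconv).1 hw
  set q : ℝ → H := fun t => (1 / t) • (F t - F 0) with hq
  set v : ℝ → H := fun t => (1 / t) • (u t - u 0) with hv
  have htv : ∀ t, 0 < t → u 0 + t • v t = u t := fun t ht => by
    simp [hv, smul_smul, ht.ne']
  have htq : ∀ t, 0 < t → F 0 + t • q t = F t := fun t ht => by
    simp [hq, smul_smul, ht.ne']
  have hineq : ∀ t, 0 < t → ∀ z, u 0 + t • z ∈ C → ⟪z, y⟫ = 0 → ⟪q t - v t, z - v t⟫ ≤ 0 := by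
    intro t ht z hz hzy
    obtain ⟨hut, hNt⟩ := hproj t ht.le
    refine inner_sub_sub_nonpos_of_proj ht hN ?_ ?_ hz hzy
    · rwa [htv t ht]
    · rwa [htv t ht, htq t ht]
  have hpos : ∀ᶠ t : ℝ in 𝓝[>] 0, 0 < t := self_mem_nhdsWithin
  have hvq : ∀ t, 0 < t → ‖v t‖ ≤ ‖q t‖ := by
    intro t ht
    have h := hineq t ht 0 (by simpa using hu₀) (inner_zero_left _)
    rw [zero_sub, inner_neg_right, inner_sub_left, real_inner_self_eq_norm_sq] at h
    have h' := real_inner_le_norm (q t) (v t)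
    by_contra! hlt
    nlinarith [norm_nonneg (q t), norm_nonneg (v t)]
  have hqM : ∀ᶠ t in 𝓝[>] 0, ‖q t‖ ≤ ‖F'‖ + 1 :=
    (hF'.norm.eventually (gt_mem_nhds (lt_add_one _))).mono fun _ h => h.le
  have hvM : ∀ᶠ t in 𝓝[>] 0, ‖v t‖ ≤ ‖F'‖ + 1 := by
    filter_upwards [hqM, hpos] with t h ht using (hvq t ht).trans h
  have hvT : ∀ᶠ t in 𝓝[>] 0, v t ∈ T := by
    filter_upwards [hpos] with t ht
    exact subset_closure ⟨t, ht, by rw [htv t ht]; exact (hproj t ht.le).1⟩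
  have hyv : Tendsto (fun t => ⟪y, v t⟫) (𝓝[>] 0) (𝓝 0) := by
    have hlow : Tendsto (fun t : ℝ => -(t * (‖q t‖ * ‖q t‖))) (𝓝[>] 0) (𝓝 0) := by
      have ht : Tendsto (fun t : ℝ => t) (𝓝[>] 0) (𝓝 0) := nhdsWithin_le_nhds
      simpa using (ht.mul (hF'.norm.mul hF'.norm)).neg
    refine tendsto_of_tendsto_of_tendsto_of_le_of_le' hlow tendsto_const_nhds ?_ ?_
    · filter_upwards [hpos] with t ht
      have h := (hproj t ht.le).2 _ hu₀
      rw [← htv t ht, ← htq t ht,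
        show F 0 + t • q t - (u 0 + t • v t) = y + t • (q t - v t) by rw [hy]; module,
        show u 0 - (u 0 + t • v t) = -(t • v t) by module, inner_neg_right, inner_smul_right,
        inner_add_left, real_inner_smul_left, inner_sub_left (q t), real_inner_self_eq_norm_sq] at h
      have h₁ : 0 ≤ ⟪y, v t⟫ + t * (⟪q t, v t⟫ - ‖v t‖ ^ 2) :=
        nonneg_of_mul_nonneg_right (by linarith) ht
      have h₂ : ⟪q t, v t⟫ - ‖v t‖ ^ 2 ≤ ‖q t‖ * ‖q t‖ := by
        have := mul_le_mul_of_nonneg_left (hvq t ht) (norm_nonneg (q t))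
        nlinarith [real_inner_le_norm (q t) (v t), sq_nonneg ‖v t‖]
      nlinarith
    · filter_upwards [hpos] with t ht
      have h := hN _ (hproj t ht.le).1
      rw [← htv t ht, add_sub_cancel_left, inner_smul_right] at h
      exact nonpos_of_mul_nonpos_right h ht
  have hdual : ∀ z ∈ T, ⟪z, y⟫ = 0 → 0 ≤ ⟪w - F', z⟫ := by
    intro z hz hzy
    have hwz : ⟪w + z, y⟫ = 0 := by rw [inner_add_left, hwK.2, hzy, add_zero]
    have h := hwN (w + z) ⟨add_mem hwK.1 hz, hwz⟩
    rw [add_sub_cancel_left] at h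
    rw [← neg_sub, inner_neg_left]
    linarith
  have hww : 0 ≤ ⟪F' - w, w⟫ := by
    have h := hwN 0 h0K
    rw [zero_sub, inner_neg_right] at h
    linarith
  have happrox : ∀ ε > 0, ∀ᶠ t in 𝓝[>] 0, ⟪F' - v t, w - v t⟫ ≤ ε := by
    intro ε hε
    have hA : 0 < ‖F'‖ + (‖F'‖ + 1) := by positivity
    have hwcl : w ∈ closure ({z | ∃ l : ℝ, 0 < l ∧ u 0 + l • z ∈ C} ∩ {z | ⟪z, y⟫ = 0}) :=
      hpoly ▸ hwK
    obtain ⟨z, ⟨⟨s, hs, hsz⟩, hzy⟩, hwz⟩ :=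
      Metric.mem_closure_iff.1 hwcl (ε / 2 / (‖F'‖ + (‖F'‖ + 1))) (by positivity)
    have hqF : Tendsto (fun t => ‖F' - q t‖ * (‖z‖ + (‖F'‖ + 1))) (𝓝[>] 0) (𝓝 0) := by
      simpa using ((tendsto_const_nhds (x := F')).sub hF').norm.mul_const (‖z‖ + (‖F'‖ + 1))
    have hts : ∀ᶠ t : ℝ in 𝓝[>] 0, t < s := nhdsWithin_le_nhds (gt_mem_nhds hs)
    filter_upwards [hpos, hts, hvM, hqF.eventually (gt_mem_nhds (half_pos hε))]
      with t ht hts hvt hqt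
    have htz : u 0 + t • z ∈ C := by
      have h := hconv.add_smul_mem hu₀ hsz (t := t / s)
        ⟨by positivity, (div_le_one hs).2 hts.le⟩
      rwa [smul_smul, div_mul_cancel₀ _ hs.ne'] at h
    have h₁ := hineq t ht z htz hzy
    have h₂ : ⟪F' - q t, z - v t⟫ ≤ ‖F' - q t‖ * (‖z‖ + (‖F'‖ + 1)) :=
      (real_inner_le_norm _ _).trans (by
        gcongr
        exact (norm_sub_le _ _).trans (by gcongr))
    have h₃ : ⟪F' - v t, w - z⟫ ≤ ε / 2 :=
      calc ⟪F' - v t, w - z⟫ ≤ ‖F' - v t‖ * ‖w - z‖ := real_inner_le_norm _ _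
        _ ≤ (‖F'‖ + (‖F'‖ + 1)) * (ε / 2 / (‖F'‖ + (‖F'‖ + 1))) := by
          rw [dist_eq_norm] at hwz
          gcongr
          exact (norm_sub_le _ _).trans (by gcongr)
        _ = ε / 2 := by field_simp
    have h₄ : ⟪F' - v t, w - v t⟫
        = ⟪q t - v t, z - v t⟫ + ⟪F' - q t, z - v t⟫ + ⟪F' - v t, w - z⟫ := by
      rw [← inner_add_left, show q t - v t + (F' - q t) = F' - v t by abel, ← inner_add_right,
        show z - v t + (w - z) = w - v t by abel]
    linarith
  rw [Metric.tendsto_nhds]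
  intro ε hε
  have hδ : 0 < ε ^ 2 / 3 := by positivity
  filter_upwards [happrox _ hδ, eventually_neg_le_inner_of_dual hvM T hvT hyv hdual hδ]
    with t h₁ h₂
  have h₃ : ‖v t - w‖ ^ 2 = ⟪F' - v t, w - v t⟫ - ⟪w - F', v t⟫ - ⟪F' - w, w⟫ := by
    rw [← real_inner_self_eq_norm_sq]
    simp only [inner_sub_left, inner_sub_right, real_inner_comm]
    ring
  rw [dist_eq_norm]
  refine lt_of_pow_lt_pow_left₀ 2 hε.le ?_
  nlinarith
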